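/- Let G = (V, E, w_G) be a weighted directed graph with non-negative integer edge weights, let s ∈ V be a source node, let h be an integer with 1 ≤ h ≤ |V|, and let ε be a real number with 0 < ε ≤ 1. Let C be a skeleton set for (G, s, h). Let d̃ : C × V → ℕ∞ satisfy dist_G(x, v) ≤ d̃(x, v) ≤ (1 + ε/3)·dist_G^h(x, v) for every x ∈ C and every v ∈ V, let H = (C, C × C, w_H) be the skeleton graph with w_H(x, y) = d̃(x, y), and let d' : C → ℝ∞ satisfy dist_H(s, x) ≤ d'(x) ≤ (1 + ε/3)·dist_H(s, x) for every x ∈ C. Then the estimate d̂(s, v) := min_{x ∈ C} (d'(x) + d̃(x, v)) satisfies dist_G(s, v) ≤ d̂(s, v) ≤ (1 + ε)·dist_G(s, v) for every node v ∈ V. -/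

import Mathlib

/-!
Upper bound: fix a node `x` of the skeleton set `C` and a shortest walk from `x` to `v`. If it has
at most `h` edges, the estimate `dtil x v` is already good. Otherwise its nodes at positions
`1, …, ⌈h/2⌉` form a shortest walk with exactly `⌈h/2⌉` nodes, which may be exchanged for another
one that meets `C` in some `x'`. The exchange changes neither the weight nor the number of edges of
the whole walk, `x'` is at most `⌈h/2⌉ ≤ h` edges away from `x`, and the remaining walk from `x'` to
`v` is again shortest and has strictly fewer edges. Induction (`exists_skeleton_split`) yields
`y ∈ C` and a splitting `dist(s, v) = a + b` with `dist_H(s, y) ≤ (1 + ε/3) a` and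
`dtil y v ≤ (1 + ε/3) b`, and `(1 + ε/3)² ≤ 1 + ε` for `ε ≤ 1`.

Lower bound: each edge of `H` weighs at least the distance in `G` of its endpoints, so by the
triangle inequality `dist_G ≤ dist_H` on `C` (`gdist_le_gdist_of_edge`).

Walks are handled through `Reach`, which remembers only the number of edges and the weight.
-/

open scoped ENat ENNReal

section SSSP

variable {V : Type*}

/-- A walk (path) from `u` to `v` in the directed graph with edge set `E`:
a nonempty list of nodes starting at `u`, ending at `v`, with consecutive pairs in `E`. -/
def IsWalk (E : Set (V × V)) (u v : V) (p : List V) : Prop :=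
  p ≠ [] ∧ p.head? = some u ∧ p.getLast? = some v ∧ p.Chain' (fun a b => (a, b) ∈ E)

/-- The weight of a walk: the sum of the weights of its edges. -/
def walkWeight (w : V × V → ℕ∞) (p : List V) : ℕ∞ :=
  ((p.zip p.tail).map w).sum

/-- The distance from `u` to `v`: the minimum weight of a walk from `u` to `v`
(`⊤` if none exists; it is `0` for `u = v` via the single-node walk). -/
noncomputable def gdist (E : Set (V × V)) (w : V × V → ℕ∞) (u v : V) : ℕ∞ :=
  sInf {c | ∃ p, IsWalk E u v p ∧ walkWeight w p = c}

/-- The `h`-hop distance: the minimum weight of a walk from `u` to `v`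
with at most `h` edges (i.e. at most `h + 1` nodes); `⊤` if none exists. -/
noncomputable def hdist (E : Set (V × V)) (w : V × V → ℕ∞) (h : ℕ) (u v : V) : ℕ∞ :=
  sInf {c | ∃ p, IsWalk E u v p ∧ p.length ≤ h + 1 ∧ walkWeight w p = c}

/-- `C ⊆ V` is a skeleton set for `(G, s, h)`: it contains `s`, and for every pair
`u, v` such that some shortest path from `u` to `v` consists of exactly `⌈h/2⌉` nodes,
there is a shortest path from `u` to `v` with exactly `⌈h/2⌉` nodes containing a node of `C`. -/
def IsSkeleton (E : Set (V × V)) (w : V × V → ℕ∞) (s : V) (h : ℕ) (C : Set V) : Prop :=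
  s ∈ C ∧ ∀ u v : V,
    (∃ p, IsWalk E u v p ∧ walkWeight w p = gdist E w u v ∧ p.length = (h + 1) / 2) →
    ∃ p, IsWalk E u v p ∧ walkWeight w p = gdist E w u v ∧ p.length = (h + 1) / 2 ∧
      ∃ x ∈ C, x ∈ p

end SSSP

/-- There is a walk from `u` to `v` with exactly `n` edges and weight `c`. -/
def Reach {V : Type*} (E : Set (V × V)) (w : V × V → ℕ∞) (u v : V) (n : ℕ) (c : ℕ∞) : Prop :=
  ∃ p, IsWalk E u v p ∧ p.length = n + 1 ∧ walkWeight w p = c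

section Walks

variable {V : Type*} {E : Set (V × V)} {w : V × V → ℕ∞}

theorem isWalk_singleton {u v a : V} : IsWalk E u v [a] ↔ a = u ∧ a = v := by
  simp +contextual [IsWalk, List.Chain']

theorem isWalk_cons_cons {u v a b : V} {l : List V} :
    IsWalk E u v (a :: b :: l) ↔ a = u ∧ (a, b) ∈ E ∧ IsWalk E b v (b :: l) := by
  simp [IsWalk, List.Chain']
  tauto

theorem walkWeight_singleton {a : V} : walkWeight w [a] = 0 := by
  simp [walkWeight]

theorem walkWeight_cons_cons {a b : V} {l : List V} :
    walkWeight w (a :: b :: l) = w (a, b) + walkWeight w (b :: l) := by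
  simp [walkWeight]

theorem reach_zero {u v : V} {c : ℕ∞} : Reach E w u v 0 c ↔ u = v ∧ c = 0 := by
  constructor
  · rintro ⟨p, hp, hl, rfl⟩
    obtain ⟨a, rfl⟩ := List.length_eq_one_iff.1 hl
    obtain ⟨rfl, rfl⟩ := isWalk_singleton.1 hp
    exact ⟨rfl, walkWeight_singleton⟩
  · rintro ⟨rfl, rfl⟩
    exact ⟨[u], isWalk_singleton.2 ⟨rfl, rfl⟩, rfl, walkWeight_singleton⟩

theorem reach_succ {u v : V} {n : ℕ} {c : ℕ∞} :
    Reach E w u v (n + 1) c ↔ ∃ x c', (u, x) ∈ E ∧ Reach E w x v n c' ∧ c = w (u, x) + c' := by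
  constructor
  · rintro ⟨p, hp, hl, rfl⟩
    match p, hp, hl with
    | a :: b :: l, hp, hl =>
      obtain ⟨rfl, hab, hp'⟩ := isWalk_cons_cons.1 hp
      exact ⟨b, _, hab, ⟨b :: l, hp', by simpa using hl, rfl⟩, walkWeight_cons_cons⟩
  · rintro ⟨x, c', hux, ⟨p, hp, hl, rfl⟩, rfl⟩
    match p, hp, hl with
    | b :: l, hp, hl =>
      have hb : b = x := by simpa using hp.2.1
      subst hb
      exact ⟨u :: b :: l, isWalk_cons_cons.2 ⟨rfl, hux, hp⟩, by simpa using hl,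
        walkWeight_cons_cons⟩

theorem Reach.trans {u x v : V} {m n : ℕ} {a b : ℕ∞} (h₁ : Reach E w u x m a)
    (h₂ : Reach E w x v n b) : Reach E w u v (m + n) (a + b) := by
  induction m generalizing u a with
  | zero =>
    obtain ⟨rfl, rfl⟩ := reach_zero.1 h₁
    simpa using h₂
  | succ m ih =>
    obtain ⟨y, c', hy, hr, rfl⟩ := reach_succ.1 h₁
    rw [Nat.add_right_comm]
    exact reach_succ.2 ⟨y, _, hy, ih hr, add_assoc _ _ _⟩

theorem Reach.split {u v : V} {m n : ℕ} {c : ℕ∞} (hr : Reach E w u v (m + n) c) :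
    ∃ x a b, Reach E w u x m a ∧ Reach E w x v n b ∧ c = a + b := by
  induction m generalizing u c with
  | zero => exact ⟨u, 0, c, reach_zero.2 ⟨rfl, rfl⟩, by simpa using hr, by simp⟩
  | succ m ih =>
    rw [Nat.add_right_comm] at hr
    obtain ⟨y, c', hy, hr', rfl⟩ := reach_succ.1 hr
    obtain ⟨x, a, b, h₁, h₂, rfl⟩ := ih hr'
    exact ⟨x, _, b, reach_succ.2 ⟨y, a, hy, h₁, rfl⟩, h₂, (add_assoc _ _ _).symm⟩

/-- A walk splits at each node it contains. -/
theorem IsWalk.split_of_mem {u v x : V} {p : List V} (hp : IsWalk E u v p) (hx : x ∈ p) :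
    ∃ i j a b, Reach E w u x i a ∧ Reach E w x v j b ∧ p.length = i + j + 1 ∧
      walkWeight w p = a + b := by
  induction p generalizing u with
  | nil => simp at hx
  | cons c l ih =>
    have hc : c = u := by simpa using hp.2.1
    subst hc
    by_cases hxc : x = c
    · subst hxc
      exact ⟨0, l.length, 0, _, reach_zero.2 ⟨rfl, rfl⟩, ⟨_, hp, rfl, rfl⟩, by simp, by simp⟩
    · have hxl : x ∈ l := by simpa [hxc] using hx
      cases l with
      | nil => simp at hxl
      | cons d l =>
        obtain ⟨-, hcd, hp'⟩ := isWalk_cons_cons.1 hp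
        obtain ⟨i, j, a, b, h₁, h₂, hl, hw⟩ := ih hp' hxl
        refine ⟨i + 1, j, w (c, d) + a, b, reach_succ.2 ⟨d, a, hcd, h₁, rfl⟩, h₂, ?_, ?_⟩
        · rw [List.length_cons, hl]; omega
        · rw [walkWeight_cons_cons, hw, add_assoc]

theorem Reach.gdist_le {u v : V} {n : ℕ} {c : ℕ∞} (hr : Reach E w u v n c) :
    gdist E w u v ≤ c := by
  obtain ⟨p, hp, -, hc⟩ := hr
  exact sInf_le ⟨p, hp, hc⟩

theorem Reach.hdist_le {u v : V} {n h : ℕ} {c : ℕ∞} (hr : Reach E w u v n c) (hn : n ≤ h) :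
    hdist E w h u v ≤ c := by
  obtain ⟨p, hp, hl, hc⟩ := hr
  exact sInf_le ⟨p, hp, by omega, hc⟩

theorem le_gdist {u v : V} {d : ℕ∞} (H : ∀ n c, Reach E w u v n c → d ≤ c) :
    d ≤ gdist E w u v := by
  refine le_sInf ?_
  rintro c ⟨p, hp, hc⟩
  refine H (p.length - 1) c ⟨p, hp, ?_, hc⟩
  have := List.length_pos_iff.2 hp.1
  omega

theorem exists_reach_gdist {u v : V} (hd : gdist E w u v ≠ ⊤) :
    ∃ n, Reach E w u v n (gdist E w u v) := by
  have hne : {c | ∃ p, IsWalk E u v p ∧ walkWeight w p = c}.Nonempty := by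
    by_contra hne
    rw [Set.not_nonempty_iff_eq_empty] at hne
    exact hd (by rw [gdist, hne, sInf_empty])
  obtain ⟨p, hp, hc⟩ := csInf_mem hne
  refine ⟨p.length - 1, p, hp, ?_, hc⟩
  have := List.length_pos_iff.2 hp.1
  omega

theorem gdist_self (u : V) : gdist E w u u = 0 :=
  le_antisymm (Reach.gdist_le (reach_zero.2 ⟨rfl, rfl⟩)) bot_le

theorem gdist_triangle (u x v : V) : gdist E w u v ≤ gdist E w u x + gdist E w x v := by
  by_cases h₁ : gdist E w u x = ⊤
  · simp [h₁]
  by_cases h₂ : gdist E w x v = ⊤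
  · simp [h₂]
  obtain ⟨m, hm⟩ := exists_reach_gdist h₁
  obtain ⟨n, hn⟩ := exists_reach_gdist h₂
  exact (hm.trans hn).gdist_le

theorem gdist_le_of_edge {u v : V} (he : (u, v) ∈ E) : gdist E w u v ≤ w (u, v) :=
  Reach.gdist_le (n := 1) (reach_succ.2 ⟨v, 0, he, reach_zero.2 ⟨rfl, rfl⟩, by simp⟩)

/-- A piece of a shortest walk of finite weight is itself shortest. -/
theorem Reach.shortest_middle {u x y v : V} {l m n : ℕ} {a b c : ℕ∞}
    (h₁ : Reach E w u x l a) (h₂ : Reach E w x y m b) (h₃ : Reach E w y v n c)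
    (hs : a + b + c = gdist E w u v) (hfin : gdist E w u v ≠ ⊤) : b = gdist E w x y := by
  refine le_antisymm (le_gdist fun k d hd => ?_) h₂.gdist_le
  have hle := ((h₁.trans hd).trans h₃).gdist_le
  rw [← hs] at hle hfin
  have hc : c ≠ ⊤ := fun hc => hfin (by simp [hc])
  have ha : a ≠ ⊤ := fun ha => hfin (by simp [ha])
  exact (ENat.add_le_add_iff_left ha).1 ((ENat.add_le_add_iff_right hc).1 hle)

/-- If every edge of a second graph weighs at least the distance of its endpoints in the first,
then its distances dominate those of the first. -/
theorem gdist_le_gdist_of_edge {E' : Set (V × V)} {w' : V × V → ℕ∞}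
    (H : ∀ x y, (x, y) ∈ E' → gdist E w x y ≤ w' (x, y)) (u v : V) :
    gdist E w u v ≤ gdist E' w' u v := by
  refine le_gdist fun n c hr => ?_
  induction n generalizing u c with
  | zero =>
    obtain ⟨rfl, rfl⟩ := reach_zero.1 hr
    exact (gdist_self u).le
  | succ n ih =>
    obtain ⟨x, c', hux, hr', rfl⟩ := reach_succ.1 hr
    exact (gdist_triangle u x v).trans (add_le_add (H _ _ hux) (ih _ _ hr'))

/-- A shortest walk from `x ∈ C` to `v` splits as `c = a + b` at some `y ∈ C` such that, up to the
factor `K`, the `C`-clique `H` covers the first part and the estimate `dtil` the second. -/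
theorem exists_skeleton_split {s : V} {h : ℕ} (hh : 1 ≤ h) {C : Set V}
    (hC : IsSkeleton E w s h C) {dtil : V → V → ℕ∞} {K : ℝ≥0∞}
    (hdtil : ∀ x ∈ C, ∀ v, (dtil x v : ℝ≥0∞) ≤ K * (hdist E w h x v : ℝ≥0∞))
    {wH : V × V → ℕ∞} (hwH : ∀ e ∈ C ×ˢ C, wH e = dtil e.1 e.2) {v : V} (n : ℕ) :
    ∀ x ∈ C, ∀ c, Reach E w x v n c → c = gdist E w x v → c ≠ ⊤ →
      ∃ y ∈ C, ∃ a b : ℕ∞, c = a + b ∧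
        (gdist (C ×ˢ C) wH x y : ℝ≥0∞) ≤ K * (a : ℝ≥0∞) ∧
        (dtil y v : ℝ≥0∞) ≤ K * (b : ℝ≥0∞) := by
  -- an estimate `dtil` is within `K` of any walk with at most `h` edges
  have hshort : ∀ x ∈ C, ∀ y m c, Reach E w x y m c → m ≤ h →
      (dtil x y : ℝ≥0∞) ≤ K * (c : ℝ≥0∞) := fun x hx y m c hr hm =>
    (hdtil x hx y).trans (by gcongr; exact hr.hdist_le hm)
  induction n using Nat.strong_induction_on with
  | _ n ih =>
  intro x hx c hr hc hfin
  by_cases hn : n ≤ h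
  · exact ⟨x, hx, 0, c, by simp, by simp [gdist_self], hshort x hx v n c hr hn⟩
  -- cut off the first edge, and then the segment of `⌈h/2⌉` nodes that follows it
  obtain ⟨r, rfl⟩ : ∃ r, n = 1 + (((h + 1) / 2 - 1) + r) :=
    ⟨n - 1 - ((h + 1) / 2 - 1), by omega⟩
  obtain ⟨u₁, c₁, d, hr₁, hr', rfl⟩ := hr.split
  obtain ⟨u₂, c₂, c₃, hr₂, hr₃, rfl⟩ := hr'.split
  have hmid : c₂ = gdist E w u₁ u₂ :=
    hr₁.shortest_middle hr₂ hr₃ (by rw [← hc, add_assoc]) (hc ▸ hfin)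
  obtain ⟨p, hp, hpl, hpw⟩ := hr₂
  obtain ⟨q, hq, hqw, hql, x', hx', hxq⟩ :=
    hC.2 u₁ u₂ ⟨p, hp, hpw.trans hmid, by omega⟩
  obtain ⟨i, j, a, b, hi, hj, hij, hab⟩ := hq.split_of_mem (w := w) hxq
  have hsum : c₂ = a + b := by rw [hmid, ← hqw, hab]
  subst hsum
  have hx₁ := hr₁.trans hi
  have hx₂ := hj.trans hr₃
  have htot : c₁ + (a + b + c₃) = (c₁ + a) + (b + c₃) := by simp only [add_assoc]
  have hopt : b + c₃ = gdist E w x' v :=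
    hx₁.shortest_middle hx₂ (reach_zero.2 ⟨rfl, rfl⟩) (by rw [← hc, htot, add_zero]) (hc ▸ hfin)
  have hfin' : b + c₃ ≠ ⊤ := fun ht => hfin (by rw [htot, ht, add_top])
  obtain ⟨y, hy, a', b', hs, hH, hd⟩ := ih (j + r) (by omega) x' hx' _ hx₂ hopt hfin'
  refine ⟨y, hy, c₁ + a + a', b', by rw [htot, hs, add_assoc, add_assoc, add_assoc], ?_, hd⟩
  have hedge : gdist (C ×ˢ C) wH x x' ≤ dtil x x' :=
    (gdist_le_of_edge (Set.mk_mem_prod hx hx')).trans (hwH (x, x') ⟨hx, hx'⟩).le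
  calc (gdist (C ×ˢ C) wH x y : ℝ≥0∞)
      ≤ ((dtil x x' + gdist (C ×ˢ C) wH x' y : ℕ∞) : ℝ≥0∞) := by
        exact_mod_cast (gdist_triangle x x' y).trans (by gcongr)
    _ = (dtil x x' : ℝ≥0∞) + (gdist (C ×ˢ C) wH x' y : ℝ≥0∞) := by push_cast; rfl
    _ ≤ K * ((c₁ + a : ℕ∞) : ℝ≥0∞) + K * (a' : ℝ≥0∞) :=
        add_le_add (hshort x hx x' _ _ hx₁ (by omega)) hH
    _ = K * ((c₁ + a + a' : ℕ∞) : ℝ≥0∞) := by push_cast; ring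

end Walks

/-- Let `0 < ε ≤ 1`, `C` a skeleton set for `(G, s, h)`,
`d̃ : C × V → ℕ∞` with `dist_G(x,v) ≤ d̃(x,v) ≤ (1+ε/3)·dist_G^h(x,v)`, `H` the skeleton
graph with `w_H = d̃`, and `d' : C → ℝ∞` with
`dist_H(s,x) ≤ d'(x) ≤ (1+ε/3)·dist_H(s,x)`. Then
`d̂(s,v) := min_{x ∈ C} (d'(x) + d̃(x,v))` satisfies
`dist_G(s,v) ≤ d̂(s,v) ≤ (1+ε)·dist_G(s,v)` for every node `v`. -/
theorem skeleton_approximate_sssp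
    {V : Type*} [Fintype V]
    (E : Set (V × V)) (wG : V × V → ℕ) (s : V) (h : ℕ)
    (hh1 : 1 ≤ h) (hh2 : h ≤ Fintype.card V)
    (ε : ℝ) (hε0 : 0 < ε) (hε1 : ε ≤ 1)
    (C : Set V) (hC : IsSkeleton E (fun e => (wG e : ℕ∞)) s h C)
    (dtil : V → V → ℕ∞)
    (hdtil : ∀ x ∈ C, ∀ v : V,
      ((gdist E (fun e => (wG e : ℕ∞)) x v : ℕ∞) : ℝ≥0∞) ≤ ((dtil x v : ℕ∞) : ℝ≥0∞) ∧
      ((dtil x v : ℕ∞) : ℝ≥0∞) ≤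
        ENNReal.ofReal (1 + ε / 3) * ((hdist E (fun e => (wG e : ℕ∞)) h x v : ℕ∞) : ℝ≥0∞))
    -- the skeleton graph `H = (C, C × C, w_H)`
    (EH : Set (V × V)) (hEH : EH = C ×ˢ C)
    (wH : V × V → ℕ∞) (hwH : ∀ e ∈ EH, wH e = dtil e.1 e.2)
    (d' : V → ℝ≥0∞)
    (hd' : ∀ x ∈ C,
      ((gdist EH wH s x : ℕ∞) : ℝ≥0∞) ≤ d' x ∧
      d' x ≤ ENNReal.ofReal (1 + ε / 3) * ((gdist EH wH s x : ℕ∞) : ℝ≥0∞))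
    (dhat : V → ℝ≥0∞)
    (hdhat : ∀ v : V, dhat v = ⨅ x ∈ C, (d' x + ((dtil x v : ℕ∞) : ℝ≥0∞))) :
    ∀ v : V,
      ((gdist E (fun e => (wG e : ℕ∞)) s v : ℕ∞) : ℝ≥0∞) ≤ dhat v ∧
      dhat v ≤ ENNReal.ofReal (1 + ε) * ((gdist E (fun e => (wG e : ℕ∞)) s v : ℕ∞) : ℝ≥0∞) := by
  intro v
  subst hEH
  constructor
  · rw [hdhat]
    refine le_iInf₂ fun x hx => ?_
    have hGH : gdist E (fun e => (wG e : ℕ∞)) s x ≤ gdist (C ×ˢ C) wH s x := by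
      refine gdist_le_gdist_of_edge (fun a b hab => ?_) s x
      rw [hwH _ hab]
      exact_mod_cast (hdtil a hab.1 b).1
    calc ((gdist E (fun e => (wG e : ℕ∞)) s v : ℕ∞) : ℝ≥0∞)
        ≤ ((gdist E (fun e => (wG e : ℕ∞)) s x + gdist E (fun e => (wG e : ℕ∞)) x v : ℕ∞) :
            ℝ≥0∞) := by exact_mod_cast gdist_triangle s x v
      _ = ((gdist E (fun e => (wG e : ℕ∞)) s x : ℕ∞) : ℝ≥0∞) +
            ((gdist E (fun e => (wG e : ℕ∞)) x v : ℕ∞) : ℝ≥0∞) := by push_cast; rfl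
      _ ≤ d' x + ((dtil x v : ℕ∞) : ℝ≥0∞) :=
        add_le_add (le_trans (by exact_mod_cast hGH) (hd' x hx).1) (hdtil x hx v).1
  · by_cases hfin : gdist E (fun e => (wG e : ℕ∞)) s v = ⊤
    · have hpos : ENNReal.ofReal (1 + ε) ≠ 0 := by
        rw [Ne, ENNReal.ofReal_eq_zero]; linarith
      rw [hfin, ENat.toENNReal_top, ENNReal.mul_top hpos]
      exact le_top
    obtain ⟨n, hn⟩ := exists_reach_gdist hfin
    obtain ⟨y, hy, a, b, hab, hH, hd⟩ := exists_skeleton_split hh1 hC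
      (fun x hx v => (hdtil x hx v).2) hwH n s hC.1 _ hn rfl hfin
    have hK2 : ENNReal.ofReal (1 + ε / 3) * ENNReal.ofReal (1 + ε / 3) ≤
        ENNReal.ofReal (1 + ε) := by
      rw [← ENNReal.ofReal_mul (by positivity)]
      exact ENNReal.ofReal_le_ofReal (by nlinarith)
    have hK1 : ENNReal.ofReal (1 + ε / 3) ≤ ENNReal.ofReal (1 + ε) :=
      ENNReal.ofReal_le_ofReal (by linarith)
    calc dhat v ≤ d' y + ((dtil y v : ℕ∞) : ℝ≥0∞) := by
          rw [hdhat]; exact iInf₂_le y hy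
      _ ≤ ENNReal.ofReal (1 + ε / 3) * (ENNReal.ofReal (1 + ε / 3) * (a : ℝ≥0∞)) +
            ENNReal.ofReal (1 + ε / 3) * (b : ℝ≥0∞) :=
          add_le_add ((hd' y hy).2.trans (by gcongr)) hd
      _ ≤ ENNReal.ofReal (1 + ε) * (a : ℝ≥0∞) + ENNReal.ofReal (1 + ε) * (b : ℝ≥0∞) := by
          rw [← mul_assoc]; gcongr
      _ = _ := by rw [hab]; push_cast; ring
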